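/- Lemma 6: Suppose the BMI feasible set F is nonempty and x̌ ∈ ℝⁿ satisfies s(x̌) > 2‖p‖₂ d_F(x̌), and let ε > 0. Then there exists η₀ > 0 such that for all η ≥ η₀ and every optimal solution x* of the penalized problem (P_η), there exists an m×m real symmetric positive semidefinite matrix Λ* such that (x*, Λ*) satisfies the KKT conditions for (P_η) and tr(Λ*)/η ≤ 2 d_F(x̌)/(s(x̌) − 2‖p‖₂ d_F(x̌)) + ε. -/

import Mathlib

/-!
An optimal solution `x*` of `(P_η)` lies within `d_F(x̌) + ‖c‖/η` of `x̌` (`opt_dist`): compare its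
objective value with that of an arbitrary feasible point.  Choose a unit vector `b` for which the
smallest eigenvalue of `-p'(x̌)b` is almost `s(x̌)`.  Since `x ↦ uᵀ p'(x)b u` changes by at most
`2‖p‖₂‖x - x̌‖` for unit `u` (`pencilDeriv_perturb`), the matrix `-p'(x*)b` dominates `σ I`, where
`σ` is close to `s(x̌) - 2‖p‖₂ d_F(x̌) > 0` for large `η`.  This is a Mangasarian–Fromovitz
condition at `x*`.

By optimality no direction strictly decreases the linearized objective while making the
linearized constraint negative definite (`no_descent`).  Separating the origin from the open
convex set of pairs dominating some linearized value gives Fritz John multipliers, and the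
direction `b` forces the objective multiplier to be positive (`exists_multiplier`).

Pairing the stationarity equation with `b` gives
`σ tr Λ ≤ (c + 2η(x* - x̌))ᵀ b ≤ ‖c‖ + 2η‖x* - x̌‖`, and dividing by `ση` yields the bound up to a
term that vanishes as `η` grows (`exists_slack`).
-/


open Matrix

noncomputable section

/-- Euclidean (ℓ₂) norm of a finite real vector. -/
def vecNorm {k : ℕ} (u : Fin k → ℝ) : ℝ := Real.sqrt (∑ i, u i ^ 2)

/-- The matrix pencil `p(x, X) = F₀ + ∑ₖ xₖ Kₖ + ∑ᵢ ∑ⱼ Xᵢⱼ Lᵢⱼ`. -/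
def pencil {n m : ℕ} (F0 : Matrix (Fin m) (Fin m) ℝ)
    (K : Fin n → Matrix (Fin m) (Fin m) ℝ)
    (L : Fin n → Fin n → Matrix (Fin m) (Fin m) ℝ)
    (x : Fin n → ℝ) (X : Matrix (Fin n) (Fin n) ℝ) : Matrix (Fin m) (Fin m) ℝ :=
  F0 + ∑ k, x k • K k + ∑ i, ∑ j, X i j • L i j

/-- Negative semidefinite real matrix. -/
def NegSemidef' {k : ℕ} (A : Matrix (Fin k) (Fin k) ℝ) : Prop := (-A).PosSemidef

/-- Negative definite real matrix. -/
def NegDef' {k : ℕ} (A : Matrix (Fin k) (Fin k) ℝ) : Prop := (-A).PosDef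

/-- The BMI feasible set `F = {x : p(x, xxᵀ) ⪯ 0}`. -/
def feasSet {n m : ℕ} (F0 : Matrix (Fin m) (Fin m) ℝ)
    (K : Fin n → Matrix (Fin m) (Fin m) ℝ)
    (L : Fin n → Fin n → Matrix (Fin m) (Fin m) ℝ) : Set (Fin n → ℝ) :=
  {x | NegSemidef' (pencil F0 K L x (vecMulVec x x))}

/-- Feasibility distance `d_F(x) = inf {‖x − a‖₂ : a ∈ F}`. -/
def distF {n m : ℕ} (F0 : Matrix (Fin m) (Fin m) ℝ)
    (K : Fin n → Matrix (Fin m) (Fin m) ℝ)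
    (L : Fin n → Fin n → Matrix (Fin m) (Fin m) ℝ) (x : Fin n → ℝ) : ℝ :=
  sInf {r | ∃ a ∈ feasSet F0 K L, r = vecNorm (x - a)}

/-- `δₖ(x) = 2 ∑ᵢ xᵢ L_{k i}`. -/
def deltaMat {n m : ℕ} (L : Fin n → Fin n → Matrix (Fin m) (Fin m) ℝ)
    (k : Fin n) (x : Fin n → ℝ) : Matrix (Fin m) (Fin m) ℝ :=
  (2 : ℝ) • ∑ i, x i • L k i

/-- The MFCQ condition at a point `x`. -/
def MFCQ {n m : ℕ} (F0 : Matrix (Fin m) (Fin m) ℝ)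
    (K : Fin n → Matrix (Fin m) (Fin m) ℝ)
    (L : Fin n → Fin n → Matrix (Fin m) (Fin m) ℝ) (x : Fin n → ℝ) : Prop :=
  ∃ b : Fin n → ℝ,
    NegDef' (pencil F0 K L x (vecMulVec x x) + ∑ k, b k • (K k + deltaMat L k x))

/-- Smallest eigenvalue of a symmetric real matrix, via the Rayleigh quotient. -/
def lambdaMin {k : ℕ} (A : Matrix (Fin k) (Fin k) ℝ) : ℝ :=
  sInf {r | ∃ u : Fin k → ℝ, vecNorm u = 1 ∧ r = u ⬝ᵥ (A *ᵥ u)}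

/-- The G-MFCQ function `s(x)`. -/
def sFun {n m : ℕ} (K : Fin n → Matrix (Fin m) (Fin m) ℝ)
    (L : Fin n → Fin n → Matrix (Fin m) (Fin m) ℝ) (x : Fin n → ℝ) : ℝ :=
  sSup {r | ∃ b : Fin n → ℝ, vecNorm b = 1 ∧
    r = lambdaMin (-(∑ k, b k • (K k + deltaMat L k x)))}

/-- Spectral norm of a real matrix. -/
def specNorm {k : ℕ} (A : Matrix (Fin k) (Fin k) ℝ) : ℝ :=
  sSup {r | ∃ v : Fin k → ℝ, vecNorm v = 1 ∧ r = vecNorm (A *ᵥ v)}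

/-- Pencil norm `‖p‖₂`. -/
def pencilNorm {n m : ℕ} (L : Fin n → Fin n → Matrix (Fin m) (Fin m) ℝ) : ℝ :=
  sSup {r | ∃ u : Fin m → ℝ, vecNorm u = 1 ∧
    r = specNorm (Matrix.of fun i j => u ⬝ᵥ (L i j *ᵥ u))}

/-- Cone `C₁`: positive semidefinite matrices. -/
def coneC1 (n : ℕ) : Set (Matrix (Fin n) (Fin n) ℝ) := {H | H.PosSemidef}

/-- Cone `C₂`: symmetric matrices with `Hᵢᵢ ≥ 0` and `Hᵢᵢ Hⱼⱼ ≥ Hᵢⱼ²`. -/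
def coneC2 (n : ℕ) : Set (Matrix (Fin n) (Fin n) ℝ) :=
  {H | H.IsSymm ∧ ∀ i j, 0 ≤ H i i ∧ H i j ^ 2 ≤ H i i * H j j}

/-- Cone `C₃`: symmetric matrices with `Hᵢᵢ ≥ 0` and `Hᵢᵢ + Hⱼⱼ ≥ 2|Hᵢⱼ|`. -/
def coneC3 (n : ℕ) : Set (Matrix (Fin n) (Fin n) ℝ) :=
  {H | H.IsSymm ∧ ∀ i j, 0 ≤ H i i ∧ 2 * |H i j| ≤ H i i + H j j}

/-- Dual cone with respect to the trace inner product. -/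
def dualCone {n : ℕ} (C : Set (Matrix (Fin n) (Fin n) ℝ)) :
    Set (Matrix (Fin n) (Fin n) ℝ) :=
  {Y | Y.IsSymm ∧ ∀ H ∈ C, 0 ≤ (Y * H).trace}

/-- `α(Λ)` : the n×n matrix with entries `⟨Lᵢⱼ, Λ⟩ = tr(Lᵢⱼ Λ)`. -/
def alphaMat {n m : ℕ} (L : Fin n → Fin n → Matrix (Fin m) (Fin m) ℝ)
    (Λ : Matrix (Fin m) (Fin m) ℝ) : Matrix (Fin n) (Fin n) ℝ :=
  Matrix.of fun i j => (L i j * Λ).trace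

/-- Objective of the penalized problem `(P_η)`. -/
def penObj {n : ℕ} (c xc : Fin n → ℝ) (η : ℝ) (x : Fin n → ℝ) : ℝ :=
  c ⬝ᵥ x + η * vecNorm (x - xc) ^ 2

/-- `x` is an optimal solution of the penalized problem `(P_η)`. -/
def IsOptPen {n m : ℕ} (F0 : Matrix (Fin m) (Fin m) ℝ)
    (K : Fin n → Matrix (Fin m) (Fin m) ℝ)
    (L : Fin n → Fin n → Matrix (Fin m) (Fin m) ℝ)
    (c xc : Fin n → ℝ) (η : ℝ) (x : Fin n → ℝ) : Prop :=
  x ∈ feasSet F0 K L ∧ ∀ y ∈ feasSet F0 K L, penObj c xc η x ≤ penObj c xc η y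

/-- Objective of the penalized convex relaxation `(R_{η,C})`. -/
def relObj {n : ℕ} (c xc : Fin n → ℝ) (η : ℝ) (x : Fin n → ℝ)
    (X : Matrix (Fin n) (Fin n) ℝ) : ℝ :=
  c ⬝ᵥ x + η * (X.trace - 2 * (xc ⬝ᵥ x) + xc ⬝ᵥ xc)

/-- Feasibility for the relaxation with cone `C`. -/
def RelFeasible {n m : ℕ} (F0 : Matrix (Fin m) (Fin m) ℝ)
    (K : Fin n → Matrix (Fin m) (Fin m) ℝ)
    (L : Fin n → Fin n → Matrix (Fin m) (Fin m) ℝ)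
    (C : Set (Matrix (Fin n) (Fin n) ℝ))
    (x : Fin n → ℝ) (X : Matrix (Fin n) (Fin n) ℝ) : Prop :=
  X.IsSymm ∧ NegSemidef' (pencil F0 K L x X) ∧ X - vecMulVec x x ∈ C

/-- `(x, X)` is an optimal solution of the penalized convex relaxation `(R_{η,C})`. -/
def IsOptRel {n m : ℕ} (F0 : Matrix (Fin m) (Fin m) ℝ)
    (K : Fin n → Matrix (Fin m) (Fin m) ℝ)
    (L : Fin n → Fin n → Matrix (Fin m) (Fin m) ℝ)
    (c xc : Fin n → ℝ) (η : ℝ) (C : Set (Matrix (Fin n) (Fin n) ℝ))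
    (x : Fin n → ℝ) (X : Matrix (Fin n) (Fin n) ℝ) : Prop :=
  RelFeasible F0 K L C x X ∧
    ∀ y Y, RelFeasible F0 K L C y Y → relObj c xc η x X ≤ relObj c xc η y Y

/-- The KKT conditions for `(P_η)` at `(x, Λ)`. -/
def KKT {n m : ℕ} (F0 : Matrix (Fin m) (Fin m) ℝ)
    (K : Fin n → Matrix (Fin m) (Fin m) ℝ)
    (L : Fin n → Fin n → Matrix (Fin m) (Fin m) ℝ)
    (c xc : Fin n → ℝ) (η : ℝ)
    (x : Fin n → ℝ) (Λ : Matrix (Fin m) (Fin m) ℝ) : Prop :=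
  Λ.IsSymm ∧ Λ.PosSemidef ∧
  c + (2 * η) • (x - xc) + (∑ k, ((K k * Λ).trace) • (Pi.single k 1 : Fin n → ℝ))
      + (2 : ℝ) • (alphaMat L Λ *ᵥ x) = 0 ∧
  Λ * pencil F0 K L x (vecMulVec x x) = 0


/-! ### Quadratic forms of real matrices -/

lemma vecNorm_nonneg {k : ℕ} (u : Fin k → ℝ) : 0 ≤ vecNorm u := Real.sqrt_nonneg _

lemma vecNorm_sq {k : ℕ} (u : Fin k → ℝ) : vecNorm u ^ 2 = u ⬝ᵥ u := by
  rw [vecNorm, Real.sq_sqrt (Finset.sum_nonneg fun i _ => sq_nonneg _)]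
  simp [dotProduct, sq]

lemma dot_self_nonneg {k : ℕ} (u : Fin k → ℝ) : 0 ≤ u ⬝ᵥ u := by
  rw [← vecNorm_sq]; positivity

lemma vecNorm_smul {k : ℕ} (t : ℝ) (ht : 0 ≤ t) (u : Fin k → ℝ) :
    vecNorm (t • u) = t * vecNorm u := by
  rw [← sq_eq_sq₀ (vecNorm_nonneg _) (mul_nonneg ht (vecNorm_nonneg _)), mul_pow,
    vecNorm_sq, vecNorm_sq]
  simp; ring

lemma vecNorm_sub_comm {k : ℕ} (u v : Fin k → ℝ) : vecNorm (u - v) = vecNorm (v - u) := by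
  unfold vecNorm
  congr 1
  exact Finset.sum_congr rfl fun i _ => by simp only [Pi.sub_apply]; ring

lemma abs_dot_le {k : ℕ} (u v : Fin k → ℝ) : |u ⬝ᵥ v| ≤ vecNorm u * vecNorm v := by
  refine abs_le_of_sq_le_sq ?_ (mul_nonneg (vecNorm_nonneg _) (vecNorm_nonneg _))
  rw [mul_pow, vecNorm_sq, vecNorm_sq]
  have := Finset.sum_mul_sq_le_sq_mul_sq Finset.univ u v
  simpa [dotProduct, sq] using this

lemma exists_unit_smul {k : ℕ} (u : Fin k → ℝ) (hu : vecNorm u ≠ 0) :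
    ∃ v, vecNorm v = 1 ∧ u = vecNorm u • v := by
  refine ⟨(vecNorm u)⁻¹ • u, ?_, ?_⟩
  · rw [vecNorm_smul _ (inv_nonneg.2 (vecNorm_nonneg _)), inv_mul_cancel₀ hu]
  · rw [smul_smul, mul_inv_cancel₀ hu, one_smul]

lemma eq_zero_of_vecNorm {k : ℕ} {u : Fin k → ℝ} (hu : vecNorm u = 0) : u = 0 := by
  have h := vecNorm_sq u
  rw [hu] at h
  exact dotProduct_self_eq_zero.1 (by linarith)

/-- A lower bound for a quadratic form on the unit sphere extends by homogeneity. -/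
lemma quad_homog {k : ℕ} (A : Matrix (Fin k) (Fin k) ℝ) (r : ℝ)
    (h : ∀ u, vecNorm u = 1 → r ≤ u ⬝ᵥ (A *ᵥ u)) (u : Fin k → ℝ) :
    r * (u ⬝ᵥ u) ≤ u ⬝ᵥ (A *ᵥ u) := by
  by_cases hu : vecNorm u = 0
  · simp [eq_zero_of_vecNorm hu]
  · obtain ⟨v, hv, huv⟩ := exists_unit_smul u hu
    have h1 := mul_le_mul_of_nonneg_left (h v hv) (sq_nonneg (vecNorm u))
    have h2 : u ⬝ᵥ (A *ᵥ u) = vecNorm u ^ 2 * (v ⬝ᵥ (A *ᵥ v)) := by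
      conv_lhs => rw [huv]
      simp only [mulVec_smul, smul_dotProduct, dotProduct_smul, smul_eq_mul]; ring
    rw [h2, ← vecNorm_sq]; linarith

/-- The entrywise `ℓ₁` norm controls the quadratic form. -/
lemma abs_quad_le {k : ℕ} (A : Matrix (Fin k) (Fin k) ℝ) (u : Fin k → ℝ) :
    |u ⬝ᵥ (A *ᵥ u)| ≤ (∑ i, ∑ j, |A i j|) * (u ⬝ᵥ u) := by
  have hle : ∀ i, u i ^ 2 ≤ u ⬝ᵥ u := fun i => by
    have := Finset.single_le_sum (f := fun i => u i * u i)
      (fun j _ => mul_self_nonneg _) (Finset.mem_univ i)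
    simpa [dotProduct, sq] using this
  have hl : u ⬝ᵥ (A *ᵥ u) = ∑ i, ∑ j, u i * (A i j * u j) := by
    simp only [dotProduct, mulVec, Finset.mul_sum]
  rw [hl, Finset.sum_mul]
  simp only [Finset.sum_mul]
  refine (Finset.abs_sum_le_sum_abs _ _).trans (Finset.sum_le_sum fun i _ => ?_)
  refine (Finset.abs_sum_le_sum_abs _ _).trans (Finset.sum_le_sum fun j _ => ?_)
  have h1 : |u i * u j| ≤ u ⬝ᵥ u := by
    rw [abs_le]
    constructor <;> nlinarith [hle i, hle j, sq_nonneg (u i - u j), sq_nonneg (u i + u j)]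
  rw [show u i * (A i j * u j) = A i j * (u i * u j) by ring, abs_mul]
  exact mul_le_mul_of_nonneg_left h1 (abs_nonneg _)

open scoped MatrixOrder in
/-- The trace inner product of two positive semidefinite matrices is nonnegative, and vanishes
only if their product does. -/
lemma trace_mul_psd {k : ℕ} {A B : Matrix (Fin k) (Fin k) ℝ} (hA : A.PosSemidef)
    (hB : B.PosSemidef) : 0 ≤ (A * B).trace ∧ ((A * B).trace = 0 → A * B = 0) := by
  obtain ⟨P, rfl⟩ := CStarAlgebra.nonneg_iff_eq_star_mul_self.mp hA.nonneg
  obtain ⟨Q, rfl⟩ := CStarAlgebra.nonneg_iff_eq_star_mul_self.mp hB.nonneg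
  simp only [star_eq_conjTranspose]
  have h : (Pᴴ * P * (Qᴴ * Q)).trace = ((P * Qᴴ)ᴴ * (P * Qᴴ)).trace := by
    rw [← Matrix.mul_assoc, trace_mul_comm, conjTranspose_mul, conjTranspose_conjTranspose]
    simp only [Matrix.mul_assoc]
  rw [h]
  refine ⟨(posSemidef_conjTranspose_mul_self _).trace_nonneg, fun h0 => ?_⟩
  rw [trace_conjTranspose_mul_self_eq_zero_iff] at h0
  rw [Matrix.mul_assoc, ← Matrix.mul_assoc P, h0]; simp

lemma psd_of_quad {k : ℕ} {A : Matrix (Fin k) (Fin k) ℝ} (hs : A.IsSymm)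
    (h : ∀ u, 0 ≤ u ⬝ᵥ (A *ᵥ u)) : A.PosSemidef :=
  .of_dotProduct_mulVec_nonneg (by rwa [IsHermitian, conjTranspose_eq_transpose_of_trivial])
    (by simpa using h)

/-! ### Fritz John separation -/

/-- A linear functional on `ℝ × Matrix` is given, on symmetric second components, by a
scalar and a symmetric matrix. -/
lemma functional_repr {m : ℕ} (φ : (ℝ × Matrix (Fin m) (Fin m) ℝ) →ₗ[ℝ] ℝ) :
    ∃ W : Matrix (Fin m) (Fin m) ℝ, W.IsSymm ∧ ∀ α Z, Z.IsSymm →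
      φ (α, Z) = φ (1, 0) * α + (W * Z).trace := by
  refine ⟨of fun i j => (φ (0, single i j 1) + φ (0, single j i 1)) / 2, ?_, ?_⟩
  · ext i j; simp [add_comm]
  · intro α Z hZ
    have h1 : φ (0, Z) = ∑ i, ∑ j, Z i j * φ (0, single i j 1) := by
      have : ((0 : ℝ), Z) = ∑ i, ∑ j, Z i j • ((0 : ℝ), single i j (1 : ℝ)) := by
        ext a b
        · simp [Prod.fst_sum]
        · conv_lhs => rw [matrix_eq_sum_single Z]
          simp [Prod.snd_sum]
      rw [this]; simp only [map_sum, map_smul, smul_eq_mul]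
    have h2 : φ (α, Z) = α * φ (1, 0) + φ (0, Z) := by
      have : (α, Z) = α • ((1 : ℝ), (0 : Matrix (Fin m) (Fin m) ℝ)) + (0, Z) := by simp
      rw [this, map_add, map_smul, smul_eq_mul]
    have h3 : φ (0, Z) = ∑ i, ∑ j, Z i j * φ (0, single j i 1) := by
      rw [h1, Finset.sum_comm]
      refine Finset.sum_congr rfl fun i _ => Finset.sum_congr rfl fun j _ => ?_
      rw [hZ.apply]
    have h4 : φ (0, Z) = (φ (0, Z) + φ (0, Z)) / 2 := by ring
    rw [h2, mul_comm, h4]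
    nth_rewrite 1 [h1]
    rw [h3, ← Finset.sum_add_distrib, Finset.sum_div]
    congr 1
    refine Finset.sum_congr rfl fun i _ => ?_
    rw [← Finset.sum_add_distrib, Finset.sum_div, diag_apply, mul_apply]
    refine Finset.sum_congr rfl fun j _ => ?_
    rw [of_apply, hZ.apply]; ring

/-- Vectors `(α, Z)` dominating some `(g h, G + D h)` strictly in both components.  The second
component is not required to be symmetric, so that the set is open. -/
def domSet {n m : ℕ} (G : Matrix (Fin m) (Fin m) ℝ)
    (D : (Fin n → ℝ) →ₗ[ℝ] Matrix (Fin m) (Fin m) ℝ) (g : (Fin n → ℝ) →ₗ[ℝ] ℝ) :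
    Set (ℝ × Matrix (Fin m) (Fin m) ℝ) :=
  {z | ∃ h, ∃ ρ > 0, g h < z.1 ∧ ∀ u, ρ * (u ⬝ᵥ u) ≤ u ⬝ᵥ ((z.2 - G - D h) *ᵥ u)}

lemma convex_domSet {n m : ℕ} (G : Matrix (Fin m) (Fin m) ℝ)
    (D : (Fin n → ℝ) →ₗ[ℝ] Matrix (Fin m) (Fin m) ℝ) (g : (Fin n → ℝ) →ₗ[ℝ] ℝ) :
    Convex ℝ (domSet G D g) := by
  rw [convex_iff_forall_pos]
  rintro ⟨α, Z⟩ ⟨h, ρ, hρ, hg, hu⟩ ⟨β, Y⟩ ⟨h', ρ', hρ', hg', hu'⟩ a b ha hb hab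
  refine ⟨a • h + b • h', a * ρ + b * ρ', by positivity, ?_, fun u => ?_⟩
  · simp only [map_add, map_smul, smul_eq_mul, Prod.fst_add, Prod.smul_fst] at *
    nlinarith
  · have e : (a • (α, Z) + b • (β, Y)).2 - G - D (a • h + b • h')
        = a • (Z - G - D h) + b • (Y - G - D h') := by
      have hG : G = a • G + b • G := by rw [← add_smul, hab, one_smul]
      conv_lhs => rw [hG]
      simp only [map_add, map_smul, Prod.snd_add, Prod.smul_snd]
      module
    rw [e, add_mulVec, dotProduct_add, smul_mulVec, smul_mulVec, dotProduct_smul,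
      dotProduct_smul, smul_eq_mul, smul_eq_mul]
    have h1 := mul_le_mul_of_nonneg_left (hu u) ha.le
    have h2 := mul_le_mul_of_nonneg_left (hu' u) hb.le
    simp only at h1 h2
    linarith

lemma isOpen_domSet {n m : ℕ} (G : Matrix (Fin m) (Fin m) ℝ)
    (D : (Fin n → ℝ) →ₗ[ℝ] Matrix (Fin m) (Fin m) ℝ) (g : (Fin n → ℝ) →ₗ[ℝ] ℝ) :
    IsOpen (domSet G D g) := by
  rw [isOpen_iff_mem_nhds]
  rintro ⟨α, Z⟩ ⟨h, ρ, hρ, hg, hu⟩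
  have hc : Continuous fun z : ℝ × Matrix (Fin m) (Fin m) ℝ =>
      ∑ i, ∑ j, |(z.2 - Z) i j| := by fun_prop
  have h1 : {z : ℝ × Matrix (Fin m) (Fin m) ℝ | ∑ i, ∑ j, |(z.2 - Z) i j| < ρ / 2} ∈
      nhds (α, Z) := (isOpen_lt hc continuous_const).mem_nhds (by simp; linarith)
  have h2 : {z : ℝ × Matrix (Fin m) (Fin m) ℝ | g h < z.1} ∈ nhds (α, Z) :=
    (isOpen_lt continuous_const continuous_fst).mem_nhds hg
  filter_upwards [h1, h2] with z hz1 hz2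
  refine ⟨h, ρ / 2, by linarith, hz2, fun u => ?_⟩
  have e : z.2 - G - D h = (Z - G - D h) + (z.2 - Z) := by abel
  rw [e, add_mulVec, dotProduct_add]
  have h3 := (abs_le.1 (abs_quad_le (z.2 - Z) u)).1
  have h4 := mul_le_mul_of_nonneg_right (le_of_lt hz1) (dot_self_nonneg u)
  have h5 := hu u
  simp only at h5 h4
  linarith

lemma nonneg_of_forall_pos {a b : ℝ} (h : ∀ t > 0, 0 ≤ a + t * b) : 0 ≤ a := by
  by_contra! ha
  have := h (-a / (2 * (|b| + 1))) (by apply div_pos <;> [linarith; positivity])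
  have h1 : -a / (2 * (|b| + 1)) * b ≤ -a / 2 := by
    rw [div_mul_eq_mul_div, div_le_div_iff₀ (by positivity) (by norm_num)]
    nlinarith [le_abs_self b]
  linarith

lemma slope_nonneg {a b : ℝ} (h : ∀ t > 0, 0 ≤ a + t * b) : 0 ≤ b := by
  by_contra! hb
  have := h ((|a| + 1) / -b) (by apply div_pos <;> [positivity; linarith])
  have h1 : (|a| + 1) / -b * b = -(|a| + 1) := by
    rw [div_neg, neg_mul, div_mul_cancel₀ _ hb.ne]
  linarith [le_abs_self a]

/-- Existence of a Lagrange multiplier: if no direction `h` strictly decreases the linear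
objective `g` while making the linearized constraint `G + D h` negative definite, and some
direction `b` makes `D b` negative definite, then `g` has a complementary multiplier.  The
direction `b` excludes a separating functional with zero coefficient on `g`. -/
lemma exists_multiplier {n m : ℕ} (G : Matrix (Fin m) (Fin m) ℝ) (hG : (-G).PosSemidef)
    (D : (Fin n → ℝ) →ₗ[ℝ] Matrix (Fin m) (Fin m) ℝ) (hD : ∀ h, (D h).IsSymm)
    (g : (Fin n → ℝ) →ₗ[ℝ] ℝ) (b : Fin n → ℝ) (σ : ℝ) (hσ : 0 < σ)
    (hb : ∀ u, σ * (u ⬝ᵥ u) ≤ u ⬝ᵥ ((-D b) *ᵥ u))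
    (hno : ∀ h, g h < 0 → ∀ ρ > 0, ¬ ∀ u, ρ * (u ⬝ᵥ u) ≤ u ⬝ᵥ ((-(G + D h)) *ᵥ u)) :
    ∃ Λ : Matrix (Fin m) (Fin m) ℝ, Λ.PosSemidef ∧
      (∀ h, g h + (Λ * D h).trace = 0) ∧ Λ * G = 0 := by
  have hGs : G.IsSymm := by
    have := hG.isHermitian
    rw [IsHermitian, conjTranspose_eq_transpose_of_trivial, transpose_neg, neg_inj] at this
    exact this
  have h0 : (0 : ℝ × Matrix (Fin m) (Fin m) ℝ) ∉ domSet G D g := by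
    rintro ⟨h, ρ, hρ, hg, hu⟩
    refine hno h hg ρ hρ fun u => ?_
    have e : (0 : ℝ × Matrix (Fin m) (Fin m) ℝ).2 - G - D h = -(G + D h) := by
      simp only [Prod.snd_zero]; abel
    rw [← e]; exact hu u
  obtain ⟨φ, hφ⟩ := geometric_hahn_banach_point_open (convex_domSet G D g)
    (isOpen_domSet G D g) h0
  obtain ⟨W, hWs, hW⟩ := functional_repr (φ : (ℝ × Matrix (Fin m) (Fin m) ℝ) →ₗ[ℝ] ℝ)
  set l := (φ : (ℝ × Matrix (Fin m) (Fin m) ℝ) →ₗ[ℝ] ℝ) (1, 0)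
  -- positivity of the separating functional on the points `(g h + s, G + D h + t I + T v vᵀ)`
  have key : ∀ h v, ∀ s > 0, ∀ t > 0, ∀ T ≥ 0,
      0 < l * (g h + s) + ((W * G).trace + (W * D h).trace + t * W.trace
        + T * (v ⬝ᵥ (W *ᵥ v))) := by
    intro h v s hs t ht T hT
    have hmem : (g h + s, G + D h + t • (1 : Matrix (Fin m) (Fin m) ℝ)
        + T • vecMulVec v v) ∈ domSet G D g := by
      refine ⟨h, t, ht, by simpa using hs, fun u => ?_⟩
      have e : G + D h + t • (1 : Matrix (Fin m) (Fin m) ℝ) + T • vecMulVec v v - G - D h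
        = t • (1 : Matrix (Fin m) (Fin m) ℝ) + T • vecMulVec v v := by abel
      simp only [e, add_mulVec, smul_mulVec, one_mulVec, dotProduct_add, dotProduct_smul,
        smul_eq_mul, vecMulVec_mulVec, op_smul_eq_smul]
      rw [dotProduct_comm v u]
      have := mul_nonneg hT (mul_self_nonneg (u ⬝ᵥ v))
      linarith
    have h1 := hφ _ hmem
    have h2 := hW (g h + s) (G + D h + t • (1 : Matrix (Fin m) (Fin m) ℝ)
        + T • vecMulVec v v) (by
          refine ((hGs.add (hD h)).add (isSymm_one.smul t)).add (IsSymm.smul ?_ T)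
          simp [IsSymm, transpose_vecMulVec])
    rw [map_zero] at h1
    rw [ContinuousLinearMap.coe_coe] at h2
    rw [h2] at h1
    convert h1 using 2
    simp only [Matrix.mul_add, trace_add, Matrix.mul_smul, trace_smul, Matrix.mul_one,
      smul_eq_mul, mul_vecMulVec, trace_vecMulVec]
    rw [dotProduct_comm v]
  have hl : 0 ≤ l := by
    refine slope_nonneg (a := (W * G).trace + W.trace) fun t ht => ?_
    have := key 0 0 t ht 1 one_pos 0 le_rfl
    simp at this
    linarith
  have hWp : W.PosSemidef := by
    refine psd_of_quad hWs fun v => slope_nonneg (a := l + (W * G).trace + W.trace)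
      fun T hT => ?_
    have := key 0 v 1 one_pos 1 one_pos T hT.le
    simp at this
    linarith
  have hlin : ∀ h, 0 ≤ (W * G).trace + (l * g h + (W * D h).trace) := by
    intro h
    refine nonneg_of_forall_pos (b := l + W.trace) fun t ht => ?_
    have := key h 0 t ht t ht 0 le_rfl
    simp at this
    linarith
  have hWG : (W * G).trace = 0 := by
    have h1 := (trace_mul_psd hWp hG).1
    have h2 := hlin 0
    simp at h1 h2
    linarith
  have hge : ∀ h, 0 ≤ l * g h + (W * D h).trace := fun h => by
    have := hlin h; rwa [hWG, zero_add] at this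
  have heq : ∀ h, l * g h + (W * D h).trace = 0 := fun h => by
    have h1 := hge h
    have h2 := hge (-h)
    simp at h2
    linarith
  have hlpos : 0 < l := by
    refine lt_of_le_of_ne hl fun hl0 => ?_
    have hps : (-D b - σ • (1 : Matrix (Fin m) (Fin m) ℝ)).PosSemidef := by
      refine psd_of_quad ((hD b).neg.sub (isSymm_one.smul σ)) fun u => ?_
      have := hb u
      simp only [sub_mulVec, smul_mulVec, one_mulVec, dotProduct_sub, dotProduct_smul,
        smul_eq_mul]
      linarith
    have h1 := (trace_mul_psd hWp hps).1
    have h2 := heq b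
    have h3 := key 0 0 1 one_pos 1 one_pos 0 le_rfl
    simp [Matrix.mul_sub, ← hl0, hWG] at h1 h2 h3
    rw [h2] at h1
    nlinarith
  refine ⟨l⁻¹ • W, hWp.smul (inv_nonneg.2 hl), fun h => ?_, ?_⟩
  · have := heq h
    rw [Matrix.smul_mul, trace_smul, smul_eq_mul]
    field_simp
    linarith
  · have h1 := (trace_mul_psd hWp hG).2 (by simp [hWG])
    rw [Matrix.mul_neg, neg_eq_zero] at h1
    rw [Matrix.smul_mul, h1, smul_zero]

/-! ### Spectral quantities of the pencil -/

lemma lambdaMin_le {k : ℕ} (A : Matrix (Fin k) (Fin k) ℝ) (u : Fin k → ℝ) (hu : vecNorm u = 1) :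
    lambdaMin A ≤ u ⬝ᵥ (A *ᵥ u) := by
  refine csInf_le ⟨-(∑ i, ∑ j, |A i j|), ?_⟩ ⟨u, hu, rfl⟩
  rintro r ⟨v, hv, rfl⟩
  have := (abs_le.1 (abs_quad_le A v)).1
  rwa [← vecNorm_sq, hv, one_pow, mul_one] at this

lemma vecNorm_mulVec_le {k : ℕ} (A : Matrix (Fin k) (Fin k) ℝ) (v : Fin k → ℝ)
    (hv : vecNorm v = 1) : vecNorm (A *ᵥ v) ≤ Real.sqrt (∑ i, ∑ j, A i j ^ 2) := by
  refine Real.sqrt_le_sqrt (Finset.sum_le_sum fun i _ => ?_)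
  have h := Finset.sum_mul_sq_le_sq_mul_sq Finset.univ (A i) v
  have hv2 : ∑ j, v j ^ 2 = 1 := by
    have := vecNorm_sq v
    rw [hv] at this
    simpa [dotProduct, sq] using this.symm
  rw [hv2, mul_one] at h
  simpa [mulVec, dotProduct] using h

lemma vecNorm_mulVec_le_specNorm {k : ℕ} (A : Matrix (Fin k) (Fin k) ℝ) (v : Fin k → ℝ) :
    vecNorm (A *ᵥ v) ≤ specNorm A * vecNorm v := by
  by_cases hv : vecNorm v = 0
  · rw [eq_zero_of_vecNorm hv]; simp [vecNorm]
  · obtain ⟨w, hw, hvw⟩ := exists_unit_smul v hv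
    have h1 : vecNorm (A *ᵥ w) ≤ specNorm A := by
      refine le_csSup ⟨Real.sqrt (∑ i, ∑ j, A i j ^ 2), ?_⟩ ⟨w, hw, rfl⟩
      rintro r ⟨v, hv, rfl⟩
      exact vecNorm_mulVec_le A v hv
    have h2 : vecNorm (A *ᵥ v) = vecNorm v * vecNorm (A *ᵥ w) := by
      conv_lhs => rw [hvw]
      rw [mulVec_smul, vecNorm_smul _ (vecNorm_nonneg _)]
    rw [h2, mul_comm]
    exact mul_le_mul_of_nonneg_right h1 (vecNorm_nonneg _)

lemma specNorm_nonneg {k : ℕ} (A : Matrix (Fin k) (Fin k) ℝ) : 0 ≤ specNorm A := by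
  refine Real.sSup_nonneg ?_
  rintro r ⟨v, -, rfl⟩
  exact vecNorm_nonneg _

lemma pencilNorm_nonneg {n m : ℕ} (L : Fin n → Fin n → Matrix (Fin m) (Fin m) ℝ) :
    0 ≤ pencilNorm L := by
  refine Real.sSup_nonneg ?_
  rintro r ⟨v, -, rfl⟩
  exact specNorm_nonneg _

lemma specNorm_le_pencilNorm {n m : ℕ} (L : Fin n → Fin n → Matrix (Fin m) (Fin m) ℝ)
    (u : Fin m → ℝ) (hu : vecNorm u = 1) :
    specNorm (Matrix.of fun i j => u ⬝ᵥ (L i j *ᵥ u)) ≤ pencilNorm L := by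
  refine le_csSup ⟨Real.sqrt (∑ i, ∑ j, (∑ a, ∑ b, |L i j a b|) ^ 2), ?_⟩ ⟨u, hu, rfl⟩
  rintro r ⟨w, hw, rfl⟩
  refine Real.sSup_le ?_ (Real.sqrt_nonneg _)
  rintro r ⟨v, hv, rfl⟩
  refine (vecNorm_mulVec_le _ v hv).trans (Real.sqrt_le_sqrt ?_)
  refine Finset.sum_le_sum fun i _ => Finset.sum_le_sum fun j _ => ?_
  have h := abs_quad_le (L i j) w
  rw [← vecNorm_sq, hw, one_pow, mul_one] at h
  rw [of_apply, ← sq_abs]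
  exact pow_le_pow_left₀ (abs_nonneg _) h 2

/-! ### First-order expansion of the problem -/

/-- Derivative at `x` of the quadratic matrix map `x ↦ p(x, xxᵀ)`. -/
def pencilDeriv {n m : ℕ} (K : Fin n → Matrix (Fin m) (Fin m) ℝ)
    (L : Fin n → Fin n → Matrix (Fin m) (Fin m) ℝ) (x : Fin n → ℝ) :
    (Fin n → ℝ) →ₗ[ℝ] Matrix (Fin m) (Fin m) ℝ :=
  Fintype.linearCombination ℝ fun k => K k + deltaMat L k x

lemma pencilDeriv_apply {n m : ℕ} (K : Fin n → Matrix (Fin m) (Fin m) ℝ)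
    (L : Fin n → Fin n → Matrix (Fin m) (Fin m) ℝ) (x h : Fin n → ℝ) :
    pencilDeriv K L x h = ∑ k, h k • (K k + deltaMat L k x) := by
  simp [pencilDeriv, Fintype.linearCombination_apply]

lemma pencil_expand {n m : ℕ} (F0 : Matrix (Fin m) (Fin m) ℝ)
    (K : Fin n → Matrix (Fin m) (Fin m) ℝ)
    (L : Fin n → Fin n → Matrix (Fin m) (Fin m) ℝ) (hLsy : ∀ i j, L i j = L j i)
    (x h : Fin n → ℝ) (t : ℝ) :
    pencil F0 K L (x + t • h) (vecMulVec (x + t • h) (x + t • h)) =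
      pencil F0 K L x (vecMulVec x x) + t • pencilDeriv K L x h
        + t ^ 2 • ∑ i, ∑ j, (h i * h j) • L i j := by
  have h1 : ∑ i, ∑ j, (x i * h j) • L i j = ∑ i, ∑ j, (h i * x j) • L i j := by
    rw [Finset.sum_comm]
    refine Finset.sum_congr rfl fun i _ => Finset.sum_congr rfl fun j _ => ?_
    rw [hLsy, mul_comm]
  have h2 : ∑ i, ∑ j, vecMulVec (x + t • h) (x + t • h) i j • L i j =
      ∑ i, ∑ j, vecMulVec x x i j • L i j + t • ∑ i, ∑ j, (x i * h j) • L i j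
        + t • ∑ i, ∑ j, (h i * x j) • L i j + t ^ 2 • ∑ i, ∑ j, (h i * h j) • L i j := by
    simp only [Finset.smul_sum, ← Finset.sum_add_distrib]
    refine Finset.sum_congr rfl fun i _ => Finset.sum_congr rfl fun j _ => ?_
    simp only [vecMulVec_apply, Pi.add_apply, Pi.smul_apply, smul_eq_mul]
    module
  have h3 : ∑ k, (x + t • h) k • K k = ∑ k, x k • K k + t • ∑ k, h k • K k := by
    simp only [Finset.smul_sum, ← Finset.sum_add_distrib]
    refine Finset.sum_congr rfl fun i _ => ?_
    simp only [Pi.add_apply, Pi.smul_apply, smul_eq_mul]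
    module
  have h4 : pencilDeriv K L x h = ∑ k, h k • K k + (2 : ℝ) • ∑ i, ∑ j, (h i * x j) • L i j := by
    rw [pencilDeriv_apply]
    simp only [smul_add, Finset.sum_add_distrib, deltaMat]
    congr 1
    rw [Finset.smul_sum]
    refine Finset.sum_congr rfl fun i _ => ?_
    rw [smul_comm, Finset.smul_sum]
    simp only [smul_smul]
  rw [pencil, pencil, h2, h3, h4, h1]
  module

lemma penObj_expand {n : ℕ} (c xc : Fin n → ℝ) (η : ℝ) (x h : Fin n → ℝ) (t : ℝ) :
    penObj c xc η (x + t • h) = penObj c xc η x + t * ((c + (2 * η) • (x - xc)) ⬝ᵥ h)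
      + t ^ 2 * (η * (h ⬝ᵥ h)) := by
  have e : x + t • h - xc = (x - xc) + t • h := by abel
  rw [penObj, penObj, e, vecNorm_sq, vecNorm_sq]
  simp only [dotProduct_add, add_dotProduct, dotProduct_smul, smul_dotProduct, smul_eq_mul,
    dotProduct_comm h (x - xc)]
  ring

lemma isSymm_sum {ι : Type*} {m : ℕ} (s : Finset ι) (A : ι → Matrix (Fin m) (Fin m) ℝ)
    (h : ∀ i ∈ s, (A i).IsSymm) : (∑ i ∈ s, A i).IsSymm := by
  rw [IsSymm, transpose_sum]
  exact Finset.sum_congr rfl h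

lemma pencilDeriv_isSymm {n m : ℕ} (K : Fin n → Matrix (Fin m) (Fin m) ℝ)
    (L : Fin n → Fin n → Matrix (Fin m) (Fin m) ℝ) (hK : ∀ k, (K k).IsSymm)
    (hL : ∀ i j, (L i j).IsSymm) (x h : Fin n → ℝ) : (pencilDeriv K L x h).IsSymm := by
  rw [pencilDeriv_apply]
  exact isSymm_sum _ _ fun k _ => ((hK k).add
    ((isSymm_sum _ _ fun i _ => (hL k i).smul _).smul _)).smul _

lemma pencil_isSymm {n m : ℕ} (F0 : Matrix (Fin m) (Fin m) ℝ)
    (K : Fin n → Matrix (Fin m) (Fin m) ℝ) (L : Fin n → Fin n → Matrix (Fin m) (Fin m) ℝ)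
    (hF0 : F0.IsSymm) (hK : ∀ k, (K k).IsSymm) (hL : ∀ i j, (L i j).IsSymm)
    (x : Fin n → ℝ) (X : Matrix (Fin n) (Fin n) ℝ) : (pencil F0 K L x X).IsSymm :=
  (hF0.add (isSymm_sum _ _ fun k _ => (hK k).smul _)).add
    (isSymm_sum _ _ fun i _ => isSymm_sum _ _ fun j _ => (hL i j).smul _)

/-- Moving from `y` to `x` changes the quadratic form of the derivative in a unit direction by
at most `2‖p‖₂‖x − y‖`. -/
lemma pencilDeriv_perturb {n m : ℕ} (K : Fin n → Matrix (Fin m) (Fin m) ℝ)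
    (L : Fin n → Fin n → Matrix (Fin m) (Fin m) ℝ) (x y b : Fin n → ℝ) (hb : vecNorm b = 1)
    (u : Fin m → ℝ) (hu : vecNorm u = 1) :
    u ⬝ᵥ ((-pencilDeriv K L y b) *ᵥ u) - 2 * pencilNorm L * vecNorm (x - y)
      ≤ u ⬝ᵥ ((-pencilDeriv K L x b) *ᵥ u) := by
  set M : Matrix (Fin n) (Fin n) ℝ := Matrix.of fun i j => u ⬝ᵥ (L i j *ᵥ u) with hM
  have h1 : u ⬝ᵥ (pencilDeriv K L x b *ᵥ u) - u ⬝ᵥ (pencilDeriv K L y b *ᵥ u)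
      = 2 * (b ⬝ᵥ (M *ᵥ (x - y))) := by
    have e : pencilDeriv K L x b - pencilDeriv K L y b
        = (2 : ℝ) • ∑ k, b k • ∑ i, (x - y) i • L k i := by
      rw [pencilDeriv_apply, pencilDeriv_apply, ← Finset.sum_sub_distrib, Finset.smul_sum]
      refine Finset.sum_congr rfl fun k _ => ?_
      simp only [deltaMat, Pi.sub_apply, sub_smul, Finset.sum_sub_distrib]
      module
    rw [← dotProduct_sub, ← sub_mulVec, e, smul_mulVec, dotProduct_smul, smul_eq_mul]
    congr 1
    rw [sum_mulVec, dotProduct_sum, dotProduct]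
    refine Finset.sum_congr rfl fun k _ => ?_
    rw [smul_mulVec, dotProduct_smul, smul_eq_mul, sum_mulVec, dotProduct_sum, mulVec, dotProduct]
    congr 1
    refine Finset.sum_congr rfl fun i _ => ?_
    rw [smul_mulVec, dotProduct_smul, smul_eq_mul, hM, of_apply, mul_comm]
  have h2 : b ⬝ᵥ (M *ᵥ (x - y)) ≤ pencilNorm L * vecNorm (x - y) := by
    have h3 := (abs_le.1 (abs_dot_le b (M *ᵥ (x - y)))).2
    rw [hb, one_mul] at h3
    exact h3.trans ((vecNorm_mulVec_le_specNorm _ _).trans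
      (mul_le_mul_of_nonneg_right (specNorm_le_pencilNorm L u hu) (vecNorm_nonneg _)))
  simp only [neg_mulVec, dotProduct_neg]
  linarith

/-- At an optimal solution no direction is a strict descent direction for both the objective and
the linearized constraint, since a short step along it would be feasible and better. -/
lemma no_descent {n m : ℕ} (F0 : Matrix (Fin m) (Fin m) ℝ)
    (K : Fin n → Matrix (Fin m) (Fin m) ℝ) (L : Fin n → Fin n → Matrix (Fin m) (Fin m) ℝ)
    (hF0 : F0.IsSymm) (hK : ∀ k, (K k).IsSymm) (hL : ∀ i j, (L i j).IsSymm)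
    (hLsy : ∀ i j, L i j = L j i) (c xc : Fin n → ℝ) (η : ℝ) (hη : 0 < η) (x : Fin n → ℝ)
    (hx : IsOptPen F0 K L c xc η x) (h : Fin n → ℝ)
    (hg : (c + (2 * η) • (x - xc)) ⬝ᵥ h < 0) (ρ : ℝ) (hρ : 0 < ρ) :
    ¬ ∀ u, ρ * (u ⬝ᵥ u) ≤
      u ⬝ᵥ ((-(pencil F0 K L x (vecMulVec x x) + pencilDeriv K L x h)) *ᵥ u) := by
  intro hu
  set γ := (c + (2 * η) • (x - xc)) ⬝ᵥ h
  set Q : Matrix (Fin m) (Fin m) ℝ := ∑ i, ∑ j, (h i * h j) • L i j with hQ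
  set C := ∑ i, ∑ j, |Q i j| with hC
  have hC0 : 0 ≤ C := Finset.sum_nonneg fun i _ => Finset.sum_nonneg fun j _ => abs_nonneg _
  have hhh := mul_nonneg hη.le (dot_self_nonneg h)
  obtain ⟨t, ht0, ht1, htC, htg⟩ : ∃ t : ℝ, 0 < t ∧ t ≤ 1 ∧ t * C ≤ ρ ∧
      t * (η * (h ⬝ᵥ h)) < -γ := by
    refine ⟨min 1 (min (ρ / (C + 1)) (-γ / (η * (h ⬝ᵥ h) + 1))), ?_, min_le_left _ _, ?_, ?_⟩
    · exact lt_min one_pos (lt_min (by positivity) (div_pos (by linarith) (by linarith)))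
    · have h1 : min 1 (min (ρ / (C + 1)) (-γ / (η * (h ⬝ᵥ h) + 1))) ≤ ρ / (C + 1) :=
        (min_le_right _ _).trans (min_le_left _ _)
      refine (mul_le_mul_of_nonneg_right h1 hC0).trans ?_
      rw [div_mul_eq_mul_div, div_le_iff₀ (by linarith)]
      nlinarith
    · have h1 : min 1 (min (ρ / (C + 1)) (-γ / (η * (h ⬝ᵥ h) + 1))) ≤
          -γ / (η * (h ⬝ᵥ h) + 1) := (min_le_right _ _).trans (min_le_right _ _)
      refine (mul_le_mul_of_nonneg_right h1 hhh).trans_lt ?_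
      rw [div_mul_eq_mul_div, div_lt_iff₀ (by linarith)]
      nlinarith
  have hfeas : x + t • h ∈ feasSet F0 K L := by
    refine psd_of_quad (pencil_isSymm F0 K L hF0 hK hL _ _).neg fun u => ?_
    rw [pencil_expand F0 K L hLsy]
    -- `p(x + th) = (1 - t) p(x) + t (p(x) + p'(x)h) + t² Q`
    have e : -(pencil F0 K L x (vecMulVec x x) + t • pencilDeriv K L x h + t ^ 2 • Q)
        = (1 - t) • (-pencil F0 K L x (vecMulVec x x))
          + t • (-(pencil F0 K L x (vecMulVec x x) + pencilDeriv K L x h)) + (-t ^ 2) • Q := by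
      module
    rw [e, add_mulVec, add_mulVec, dotProduct_add, dotProduct_add, smul_mulVec, smul_mulVec,
      smul_mulVec, dotProduct_smul, dotProduct_smul, dotProduct_smul]
    simp only [smul_eq_mul]
    have hx1 : 0 ≤ u ⬝ᵥ ((-pencil F0 K L x (vecMulVec x x)) *ᵥ u) := by
      have h1 : (-pencil F0 K L x (vecMulVec x x)).PosSemidef := hx.1
      simpa using h1.dotProduct_mulVec_nonneg u
    have hq := (abs_le.1 (abs_quad_le Q u)).2
    rw [← hC] at hq
    have h1 := mul_nonneg (sub_nonneg.2 ht1) hx1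
    have h2 := mul_le_mul_of_nonneg_left (hu u) ht0.le
    have h3 := mul_le_mul_of_nonneg_left hq (sq_nonneg t)
    have h4 := mul_le_mul_of_nonneg_left
      (mul_le_mul_of_nonneg_right htC (dot_self_nonneg u)) ht0.le
    linarith
  have hopt := hx.2 _ hfeas
  rw [penObj_expand] at hopt
  have h1 := mul_lt_mul_of_pos_left htg ht0
  have : 0 ≤ t * γ + t ^ 2 * (η * (h ⬝ᵥ h)) := by linarith
  linarith

/-- An optimal solution is at distance at most `d_F(x̌) + ‖c‖/η` from `x̌`. -/
lemma opt_dist {n m : ℕ} (F0 : Matrix (Fin m) (Fin m) ℝ)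
    (K : Fin n → Matrix (Fin m) (Fin m) ℝ) (L : Fin n → Fin n → Matrix (Fin m) (Fin m) ℝ)
    (c xc : Fin n → ℝ) (η : ℝ) (hη : 0 < η) (x : Fin n → ℝ)
    (hx : IsOptPen F0 K L c xc η x) :
    vecNorm (x - xc) ≤ distF F0 K L xc + vecNorm c / η := by
  rw [← sub_le_iff_le_add]
  refine le_csInf ⟨_, x, hx.1, rfl⟩ ?_
  rintro _ ⟨a, ha, rfl⟩
  rw [sub_le_iff_le_add, vecNorm_sub_comm xc a]
  have hopt := hx.2 a ha
  have h1 : c ⬝ᵥ a - c ⬝ᵥ x ≤ vecNorm c * (vecNorm (a - xc) + vecNorm (x - xc)) := by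
    have e : c ⬝ᵥ a - c ⬝ᵥ x = c ⬝ᵥ (a - xc) - c ⬝ᵥ (x - xc) := by
      simp only [dotProduct_sub]; ring
    have h2 := (abs_le.1 (abs_dot_le c (a - xc))).2
    have h3 := (abs_le.1 (abs_dot_le c (x - xc))).1
    rw [e]; linarith
  unfold penObj at hopt
  have ha0 := vecNorm_nonneg (a - xc)
  have hc0 : 0 ≤ vecNorm c / η := div_nonneg (vecNorm_nonneg c) hη.le
  set r := vecNorm (x - xc)
  set ra := vecNorm (a - xc)
  have hc : vecNorm c = vecNorm c / η * η := by field_simp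
  set q := vecNorm c / η
  rw [hc] at h1
  -- dividing `η (r² - rₐ²) ≤ ‖c‖ (r + rₐ)` by `η (r + rₐ)`
  by_contra! hlt
  have hp : 0 < η * ((r + ra) * (r - ra - q)) :=
    mul_pos hη (mul_pos (by linarith) (by linarith))
  nlinarith

/-! ### Stationarity and the trace bound -/

lemma stationarity_vector {n m : ℕ} (K : Fin n → Matrix (Fin m) (Fin m) ℝ)
    (L : Fin n → Fin n → Matrix (Fin m) (Fin m) ℝ) (v x : Fin n → ℝ)
    (Λ : Matrix (Fin m) (Fin m) ℝ)
    (h : ∀ h, v ⬝ᵥ h + (Λ * pencilDeriv K L x h).trace = 0) :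
    v + (∑ k, ((K k * Λ).trace) • (Pi.single k 1 : Fin n → ℝ))
      + (2 : ℝ) • (alphaMat L Λ *ᵥ x) = 0 := by
  ext k
  have hk := h (Pi.single k 1)
  rw [dotProduct_single_one] at hk
  have e : pencilDeriv K L x (Pi.single k 1) = K k + deltaMat L k x := by
    simp [pencilDeriv]
  rw [e, trace_mul_comm, Matrix.add_mul, trace_add] at hk
  have e2 : (deltaMat L k x * Λ).trace = 2 * (alphaMat L Λ *ᵥ x) k := by
    simp only [deltaMat, Matrix.smul_mul, trace_smul, Matrix.sum_mul, trace_sum, smul_eq_mul,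
      mulVec, dotProduct, alphaMat, of_apply]
    congr 1
    exact Finset.sum_congr rfl fun i _ => mul_comm _ _
  have e3 : (∑ j, ((K j * Λ).trace) • (Pi.single j 1 : Fin n → ℝ)) k = (K k * Λ).trace := by
    simp [Finset.sum_apply, Pi.single_apply]
  simp only [Pi.add_apply, Pi.smul_apply, smul_eq_mul, Pi.zero_apply, e3]
  linarith

/-- The perturbed bound tends to the target bound as the perturbation `τ` tends to `0`. -/
lemma exists_slack (d s P ε : ℝ) (hgap : 2 * P * d < s) (hε : 0 < ε) :
    ∃ τ > 0, 0 < s - τ - 2 * P * (d + τ) ∧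
      (2 * d + 3 * τ) / (s - τ - 2 * P * (d + τ)) ≤ 2 * d / (s - 2 * P * d) + ε := by
  have hne : s - 0 - 2 * P * (d + 0) ≠ 0 := by
    have : 0 < s - 2 * P * d := by linarith
    simpa using this.ne'
  have hc1 : ContinuousAt (fun τ : ℝ => s - τ - 2 * P * (d + τ)) 0 := by fun_prop
  have hc2 : ContinuousAt (fun τ : ℝ => (2 * d + 3 * τ) / (s - τ - 2 * P * (d + τ))) 0 :=
    ContinuousAt.div (by fun_prop) hc1 hne
  have h1 := hc1.eventually (lt_mem_nhds (a := 0) (by simp; linarith))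
  have h2 := hc2.eventually (gt_mem_nhds (a := 2 * d / (s - 2 * P * d) + ε)
    (by simpa using hε))
  have h3 := (h1.and h2).filter_mono (nhdsWithin_le_nhds (s := Set.Ioi 0))
  obtain ⟨τ, ⟨ha, hb⟩, hτ⟩ := (h3.and self_mem_nhdsWithin).exists
  exact ⟨τ, hτ, ha, hb.le⟩

theorem bmi_lemma_six {n m : ℕ} (hn : 0 < n) (hm : 0 < m)
    (F0 : Matrix (Fin m) (Fin m) ℝ)
    (K : Fin n → Matrix (Fin m) (Fin m) ℝ)
    (L : Fin n → Fin n → Matrix (Fin m) (Fin m) ℝ)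
    (hF0 : F0.IsSymm) (hK : ∀ k, (K k).IsSymm)
    (hL : ∀ i j, (L i j).IsSymm) (hLsy : ∀ i j, L i j = L j i)
    (c xc : Fin n → ℝ)
    (hne : (feasSet F0 K L).Nonempty)
    (hgap : 2 * pencilNorm L * distF F0 K L xc < sFun K L xc)
    (ε : ℝ) (hε : 0 < ε) :
    ∃ η₀ > (0 : ℝ), ∀ η ≥ η₀,
      ∀ xs : Fin n → ℝ, IsOptPen F0 K L c xc η xs →
        ∃ Λ : Matrix (Fin m) (Fin m) ℝ,
          KKT F0 K L c xc η xs Λ ∧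
          Λ.trace / η ≤
            2 * distF F0 K L xc / (sFun K L xc - 2 * pencilNorm L * distF F0 K L xc)
              + ε := by
  obtain ⟨τ, hτ, hden, hbound⟩ := exists_slack (distF F0 K L xc) (sFun K L xc) (pencilNorm L) ε
    hgap hε
  -- a direction nearly attaining `s(x̌)`
  obtain ⟨_, ⟨b, hb1, rfl⟩, hb⟩ : ∃ r ∈ {r | ∃ b : Fin n → ℝ, vecNorm b = 1 ∧
      r = lambdaMin (-(∑ k, b k • (K k + deltaMat L k xc)))}, sFun K L xc - τ < r := by
    refine exists_lt_of_lt_csSup ⟨_, Pi.single ⟨0, hn⟩ 1, ?_, rfl⟩ (sub_lt_self _ hτ)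
    rw [vecNorm, Real.sqrt_eq_one]
    simp [Pi.single_apply]
  rw [← pencilDeriv_apply] at hb
  have hc0 := vecNorm_nonneg c
  refine ⟨vecNorm c / τ + 1, by positivity, fun η hη xs hxs => ?_⟩
  have hη0 : 0 < η := lt_of_lt_of_le (by positivity) hη
  have hq : vecNorm c / η ≤ τ := by
    rw [div_le_iff₀ hη0, mul_comm, ← div_le_iff₀ hτ]
    linarith
  have hr : vecNorm (xs - xc) ≤ distF F0 K L xc + τ :=
    (opt_dist F0 K L c xc η hη0 xs hxs).trans (by linarith)
  have hP := pencilNorm_nonneg L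
  set σ := sFun K L xc - τ - 2 * pencilNorm L * (distF F0 K L xc + τ)
  have hbσ : ∀ u, σ * (u ⬝ᵥ u) ≤ u ⬝ᵥ ((-pencilDeriv K L xs b) *ᵥ u) := by
    refine quad_homog _ _ fun u hu => ?_
    have h1 := pencilDeriv_perturb K L xs xc b hb1 u hu
    have h2 := lambdaMin_le (-pencilDeriv K L xc b) u hu
    have h3 := mul_le_mul_of_nonneg_left hr (mul_nonneg zero_le_two hP)
    simp only [σ]
    linarith
  set v := c + (2 * η) • (xs - xc) with hv
  obtain ⟨Λ, hΛ, hstat, hcomp⟩ := exists_multiplier (pencil F0 K L xs (vecMulVec xs xs)) hxs.1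
    (pencilDeriv K L xs) (pencilDeriv_isSymm K L hK hL xs) (dotProductBilin ℝ ℝ v) b σ hden hbσ
    (fun h hh ρ hρ => no_descent F0 K L hF0 hK hL hLsy c xc η hη0 xs hxs h hh ρ hρ)
  have hΛs : Λ.IsSymm := by
    have := hΛ.isHermitian
    rwa [IsHermitian, conjTranspose_eq_transpose_of_trivial] at this
  refine ⟨Λ, ⟨hΛs, hΛ, stationarity_vector K L v xs Λ hstat, hcomp⟩, ?_⟩
  -- pairing stationarity with `b` bounds `σ tr Λ`
  have htr : σ * Λ.trace ≤ v ⬝ᵥ b := by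
    have hps : (-pencilDeriv K L xs b - σ • (1 : Matrix (Fin m) (Fin m) ℝ)).PosSemidef := by
      refine psd_of_quad ((pencilDeriv_isSymm K L hK hL xs b).neg.sub (isSymm_one.smul σ))
        fun u => ?_
      have := hbσ u
      simp only [sub_mulVec, smul_mulVec, one_mulVec, dotProduct_sub, dotProduct_smul,
        smul_eq_mul]
      linarith
    have h1 := (trace_mul_psd hΛ hps).1
    have h2 : v ⬝ᵥ b + (Λ * pencilDeriv K L xs b).trace = 0 := hstat b
    simp [Matrix.mul_sub] at h1
    linarith
  have hvb : v ⬝ᵥ b ≤ vecNorm c + 2 * η * vecNorm (xs - xc) := by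
    have h1 := (abs_le.1 (abs_dot_le c b)).2
    have h2 := (abs_le.1 (abs_dot_le (xs - xc) b)).2
    rw [hb1, mul_one] at h1 h2
    rw [hv, add_dotProduct, smul_dotProduct, smul_eq_mul]
    have h3 := mul_le_mul_of_nonneg_left h2 (by positivity : 0 ≤ 2 * η)
    linarith
  refine le_trans ?_ hbound
  rw [div_le_div_iff₀ hη0 hden]
  have h1 : vecNorm c ≤ τ * η := (div_le_iff₀ hη0).1 hq
  have h2 := mul_le_mul_of_nonneg_left hr (by positivity : 0 ≤ 2 * η)
  linarith
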